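/- Riesz potential composition (semigroup) formula: for α₁, α₂ ∈ (0, n) with α₁ + α₂ < n, and all x ≠ z in ℝⁿ, ∫_{ℝⁿ} (R_{α₁,n}/|x-y|^{n-α₁}) · (R_{α₂,n}/|y-z|^{n-α₂}) dy = R_{α₁+α₂,n}/|x-z|^{n-(α₁+α₂)}, where R_{γ,n} := Γ((n-γ)/2)/(π^{n/2} 2^{γ} Γ(γ/2)). -/

import Mathlib

open MeasureTheory Real

/-- The Riesz potential normalization constant `R_{γ,n} = Γ((n-γ)/2)/(π^{n/2} 2^γ Γ(γ/2))`. -/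
noncomputable def rieszConst (n : ℕ) (γ : ℝ) : ℝ :=
  Real.Gamma (((n : ℝ) - γ) / 2) /
    (Real.pi ^ ((n : ℝ) / 2) * (2 : ℝ) ^ γ * Real.Gamma (γ / 2))

/-!
The Riesz kernel `R_γ / |v|^{n-γ}` is the average of the heat kernels `p_t(v)` over `t > 0` with
weight `t^{γ/2-1} / Γ(γ/2)`. By Tonelli's theorem and the heat semigroup law `p_s * p_t = p_{s+t}`,
convolving two such averages amounts to convolving their weights, and Euler's Beta integral says
that the weights form a convolution semigroup in `γ`.
-/

open Module (finrank)
open scoped ENNReal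

section Subordination

variable {T G : Type*} [MeasurableSpace T] [MeasurableSpace G]

/-- Subordination (in the sense of Bochner) of a family `p` of functions on `G`, indexed by times
`t : T`, to the weight `k`: the average of the `p t` against `k` and the measure `τ` on times. -/
noncomputable def subordinate (τ : Measure T) (p : T → G → ℝ≥0∞) (k : T → ℝ≥0∞) (x : G) : ℝ≥0∞ :=
  ∫⁻ t, k t * p t x ∂τ

variable [Add G] [Neg G] [MeasurableAdd₂ G] [MeasurableNeg G] {τ : Measure T} [SFinite τ]
  {μ : Measure G} [SFinite μ] {p : T → G → ℝ≥0∞} {k l : T → ℝ≥0∞}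

lemma subordinate_lconvolution_apply (hp : Measurable p.uncurry) (hk : Measurable k)
    (hl : Measurable l) (x : G) :
    (subordinate τ p k ⋆ₗ[μ] subordinate τ p l) x =
      ∫⁻ s, ∫⁻ t, k s * l t * (p s ⋆ₗ[μ] p t) x ∂τ ∂τ := by
  have h_meas : Measurable fun q : (G × T) × T ↦
      k q.1.2 * l q.2 * (p q.1.2 q.1.1 * p q.2 (-q.1.1 + x)) := by fun_prop
  calc (subordinate τ p k ⋆ₗ[μ] subordinate τ p l) x
    _ = ∫⁻ y, ∫⁻ s, ∫⁻ t, k s * l t * (p s y * p t (-y + x)) ∂τ ∂τ ∂μ := by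
        refine lintegral_congr fun y ↦ ?_
        simp only [subordinate]
        rw [← lintegral_mul_const _ (by fun_prop)]
        refine lintegral_congr fun s ↦ ?_
        rw [← lintegral_const_mul _ (by fun_prop)]
        exact lintegral_congr fun t ↦ mul_mul_mul_comm ..
    _ = ∫⁻ s, ∫⁻ t, ∫⁻ y, k s * l t * (p s y * p t (-y + x)) ∂μ ∂τ ∂τ := by
        rw [lintegral_lintegral_swap h_meas.lintegral_prod_right'.aemeasurable]
        exact lintegral_congr fun s ↦ lintegral_lintegral_swap (by fun_prop)
    _ = ∫⁻ s, ∫⁻ t, k s * l t * (p s ⋆ₗ[μ] p t) x ∂τ ∂τ :=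
        lintegral_congr fun s ↦ lintegral_congr fun t ↦ lintegral_const_mul _ (by fun_prop)

theorem subordinate_lconvolution [AddGroup T] [MeasurableAdd₂ T] [MeasurableNeg T]
    [τ.IsAddLeftInvariant] (hp : Measurable p.uncurry) (hk : Measurable k) (hl : Measurable l)
    (h_semigroup : ∀ s t, k s ≠ 0 → l t ≠ 0 → p s ⋆ₗ[μ] p t = p (s + t)) :
    subordinate τ p k ⋆ₗ[μ] subordinate τ p l = subordinate τ p (k ⋆ₗ[τ] l) := by
  ext x
  calc (subordinate τ p k ⋆ₗ[μ] subordinate τ p l) x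
    _ = ∫⁻ s, ∫⁻ t, k s * l t * (p s ⋆ₗ[μ] p t) x ∂τ ∂τ :=
        subordinate_lconvolution_apply hp hk hl x
    _ = ∫⁻ s, ∫⁻ t, k s * l t * p (s + t) x ∂τ ∂τ := by
        refine lintegral_congr fun s ↦ lintegral_congr fun t ↦ ?_
        rcases eq_or_ne (k s) 0 with hs | hs
        · simp only [hs, zero_mul]
        rcases eq_or_ne (l t) 0 with ht | ht
        · simp only [ht, mul_zero, zero_mul]
        rw [h_semigroup s t hs ht]
    _ = ∫⁻ s, ∫⁻ u, k s * l (-s + u) * p u x ∂τ ∂τ := by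
        refine lintegral_congr fun s ↦ ?_
        rw [← lintegral_add_left_eq_self (fun u ↦ k s * l (-s + u) * p u x) s]
        simp only [neg_add_cancel_left]
    _ = ∫⁻ u, (k ⋆ₗ[τ] l) u * p u x ∂τ := by
        rw [lintegral_lintegral_swap (by fun_prop)]
        exact lintegral_congr fun u ↦ lintegral_mul_const _ (by fun_prop)

end Subordination

section RiemannLiouville

/-- The Riemann–Liouville kernel `t ^ (a - 1) / Γ(a)` on `t > 0`, extended by zero: convolution with
it is fractional integration of order `a`. -/
noncomputable def riemannLiouvilleKernel (a : ℝ) : ℝ → ℝ≥0∞ :=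
  (Set.Ioi 0).indicator fun t ↦ ENNReal.ofReal (t ^ (a - 1) / Gamma a)

lemma riemannLiouvilleKernel_of_pos (a : ℝ) {t : ℝ} (ht : 0 < t) :
    riemannLiouvilleKernel a t = ENNReal.ofReal (t ^ (a - 1) / Gamma a) :=
  Set.indicator_of_mem ht _

lemma riemannLiouvilleKernel_of_nonpos (a : ℝ) {t : ℝ} (ht : t ≤ 0) :
    riemannLiouvilleKernel a t = 0 :=
  Set.indicator_of_notMem ht.not_gt _

lemma pos_of_riemannLiouvilleKernel_ne_zero {a t : ℝ} (h : riemannLiouvilleKernel a t ≠ 0) :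
    0 < t := by
  contrapose! h
  exact riemannLiouvilleKernel_of_nonpos a h

@[fun_prop]
lemma measurable_riemannLiouvilleKernel (a : ℝ) : Measurable (riemannLiouvilleKernel a) :=
  .indicator (by fun_prop) measurableSet_Ioi

lemma lintegral_eq_ofReal_mul_lintegral_comp_mul_left {u : ℝ} (hu : 0 < u) (f : ℝ → ℝ≥0∞) :
    ∫⁻ s, f s = ENNReal.ofReal u * ∫⁻ v, f (u * v) := by
  conv_lhs => rw [← Real.smul_map_volume_mul_left hu.ne', lintegral_smul_measure, abs_of_pos hu]
  rw [(measurableEmbedding_mulLeft₀ hu.ne').lintegral_map, smul_eq_mul]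

lemma riemannLiouvilleKernel_mul_eq_betaPDF {a b u : ℝ} (ha : 0 < a) (hb : 0 < b) (hu : 0 < u)
    (v : ℝ) :
    ENNReal.ofReal u *
        (riemannLiouvilleKernel a (u * v) * riemannLiouvilleKernel b (-(u * v) + u)) =
      riemannLiouvilleKernel (a + b) u * ProbabilityTheory.betaPDF a b v := by
  have h_factor : -(u * v) + u = u * (1 - v) := by ring
  rcases le_or_gt v 0 with hv₀ | hv₀
  · rw [ProbabilityTheory.betaPDF_eq_zero_of_nonpos hv₀,
      riemannLiouvilleKernel_of_nonpos a (mul_nonpos_of_nonneg_of_nonpos hu.le hv₀),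
      zero_mul, mul_zero, mul_zero]
  rcases le_or_gt 1 v with hv₁ | hv₁
  · rw [ProbabilityTheory.betaPDF_eq_zero_of_one_le hv₁, h_factor,
      riemannLiouvilleKernel_of_nonpos b
        (mul_nonpos_of_nonneg_of_nonpos hu.le (sub_nonpos.2 hv₁)), mul_zero, mul_zero, mul_zero]
  have hv₁' : 0 < 1 - v := sub_pos.2 hv₁
  rw [ProbabilityTheory.betaPDF_of_pos_lt_one hv₀ hv₁, h_factor,
    riemannLiouvilleKernel_of_pos a (by positivity),
    riemannLiouvilleKernel_of_pos b (by positivity), riemannLiouvilleKernel_of_pos _ hu,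
    ← ENNReal.ofReal_mul (by positivity), ← ENNReal.ofReal_mul (by positivity),
    ← ENNReal.ofReal_mul (by positivity), mul_rpow hu.le hv₀.le, mul_rpow hu.le hv₁'.le,
    show a + b - 1 = 1 + (a - 1) + (b - 1) by ring, rpow_add hu, rpow_add hu, rpow_one,
    ProbabilityTheory.beta]
  congr 1
  field_simp

theorem riemannLiouvilleKernel_lconvolution {a b : ℝ} (ha : 0 < a) (hb : 0 < b) :
    riemannLiouvilleKernel a ⋆ₗ riemannLiouvilleKernel b = riemannLiouvilleKernel (a + b) := by
  ext u
  rw [lconvolution_def]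
  rcases le_or_gt u 0 with hu | hu
  · rw [riemannLiouvilleKernel_of_nonpos _ hu, lintegral_eq_zero_iff (by fun_prop)]
    refine .of_forall fun s ↦ mul_eq_zero.2 ?_
    rcases le_or_gt s 0 with hs | hs
    · exact .inl (riemannLiouvilleKernel_of_nonpos a hs)
    · exact .inr (riemannLiouvilleKernel_of_nonpos b (by linarith))
  · rw [lintegral_eq_ofReal_mul_lintegral_comp_mul_left hu,
      ← lintegral_const_mul' _ _ ENNReal.ofReal_ne_top]
    simp_rw [riemannLiouvilleKernel_mul_eq_betaPDF ha hb hu]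
    have h_meas : Measurable (ProbabilityTheory.betaPDF a b) :=
      (ProbabilityTheory.measurable_betaPDFReal a b).ennreal_ofReal
    rw [lintegral_const_mul _ h_meas,
      ProbabilityTheory.lintegral_betaPDF_eq_one ha hb, mul_one]

end RiemannLiouville

section InverseGamma

theorem integral_rpow_mul_exp_neg_div_Ioi {p c : ℝ} (hp : 0 < p) (hc : 0 < c) :
    ∫ t in Set.Ioi (0 : ℝ), t ^ (-p - 1) * exp (-(c / t)) = Gamma p / c ^ p := by
  have h_inv : ∀ t ∈ Set.Ioi (0 : ℝ), t ^ (-p - 1) * exp (-(c / t)) =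
      (|(-1 : ℝ)| * t ^ ((-1 : ℝ) - 1)) •
        ((t ^ (-1 : ℝ)) ^ (p - 1) * exp (-(c * t ^ (-1 : ℝ)))) := by
    intro t (ht : 0 < t)
    rw [← rpow_mul ht.le, smul_eq_mul, abs_neg, abs_one, one_mul, ← mul_assoc, ← rpow_add ht,
      rpow_neg_one, ← div_eq_mul_inv]
    ring_nf
  rw [setIntegral_congr_fun measurableSet_Ioi h_inv,
    integral_comp_rpow_Ioi (fun y ↦ y ^ (p - 1) * exp (-(c * y))) (by norm_num),
    integral_rpow_mul_exp_neg_mul_Ioi hp hc, one_div, inv_rpow hc.le, inv_mul_eq_div]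

lemma lintegral_rpow_mul_exp_neg_div_Ioi {p c : ℝ} (hp : 0 < p) (hc : 0 < c) :
    ∫⁻ t in Set.Ioi (0 : ℝ), ENNReal.ofReal (t ^ (-p - 1) * exp (-(c / t))) =
      ENNReal.ofReal (Gamma p / c ^ p) := by
  rw [← integral_rpow_mul_exp_neg_div_Ioi hp hc]
  refine (ofReal_integral_eq_lintegral_ofReal (.of_integral_ne_zero ?_) ?_).symm
  · rw [integral_rpow_mul_exp_neg_div_Ioi hp hc]
    positivity
  · refine ae_restrict_of_forall_mem measurableSet_Ioi fun t (ht : 0 < t) ↦ ?_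
    simp only [Pi.zero_apply]
    positivity

end InverseGamma

section Gaussian

variable {V : Type*} [NormedAddCommGroup V] [InnerProductSpace ℝ V]

lemma norm_sq_div_add_norm_sub_sq_div {s t : ℝ} (hs : s ≠ 0) (ht : t ≠ 0) (hst : s + t ≠ 0)
    (x y : V) :
    ‖y‖ ^ 2 / s + ‖x - y‖ ^ 2 / t =
      ‖x‖ ^ 2 / (s + t) + (s + t) / (s * t) * ‖y - (s / (s + t)) • x‖ ^ 2 := by
  rw [norm_sub_sq_real, norm_sub_sq_real, inner_smul_right, norm_smul, mul_pow, norm_eq_abs, sq_abs,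
    real_inner_comm]
  field_simp
  ring

/-- The heat kernel `(4πt)^{-n/2} exp(-|v|² / 4t)` at time `t > 0` on an `n`-dimensional Euclidean
space, with values in `ℝ≥0∞` so that it can be integrated by Tonelli's theorem. -/
noncomputable def heatKernel (t : ℝ) (v : V) : ℝ≥0∞ :=
  ENNReal.ofReal ((4 * π * t) ^ (-(finrank ℝ V / 2 : ℝ)) * exp (-(‖v‖ ^ 2 / (4 * t))))

lemma measurable_uncurry_heatKernel [MeasurableSpace V] [BorelSpace V] :
    Measurable (heatKernel (V := V)).uncurry := by
  unfold heatKernel Function.uncurry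
  fun_prop

lemma heatKernel_mul_heatKernel {s t : ℝ} (hs : 0 < s) (ht : 0 < t) (x y : V) :
    heatKernel s y * heatKernel t (-y + x) =
      ENNReal.ofReal ((4 * π * s) ^ (-(finrank ℝ V / 2 : ℝ)) *
          (4 * π * t) ^ (-(finrank ℝ V / 2 : ℝ)) * exp (-(‖x‖ ^ 2 / (4 * (s + t))))) *
        ENNReal.ofReal (exp (-((s + t) / (4 * s * t)) * ‖y - (s / (s + t)) • x‖ ^ 2)) := by
  have h_square := norm_sq_div_add_norm_sub_sq_div hs.ne' ht.ne' (add_pos hs ht).ne' x y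
  have h_exp : exp (-(‖y‖ ^ 2 / (4 * s))) * exp (-(‖x - y‖ ^ 2 / (4 * t))) =
      exp (-(‖x‖ ^ 2 / (4 * (s + t)))) *
        exp (-((s + t) / (4 * s * t)) * ‖y - (s / (s + t)) • x‖ ^ 2) := by
    rw [← exp_add, ← exp_add]
    congr 1
    linear_combination (norm := (field_simp; ring)) (-1 / 4) * h_square
  rw [heatKernel, heatKernel, neg_add_eq_sub, ← ENNReal.ofReal_mul (by positivity),
    ← ENNReal.ofReal_mul (by positivity), mul_mul_mul_comm, h_exp, ← mul_assoc]

variable [FiniteDimensional ℝ V] [MeasurableSpace V] [BorelSpace V]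

lemma lintegral_exp_neg_mul_sq_norm {b : ℝ} (hb : 0 < b) :
    ∫⁻ v : V, ENNReal.ofReal (exp (-b * ‖v‖ ^ 2)) =
      ENNReal.ofReal ((π / b) ^ (finrank ℝ V / 2 : ℝ)) := by
  rw [← GaussianFourier.integral_rexp_neg_mul_sq_norm hb]
  refine (ofReal_integral_eq_lintegral_ofReal (.of_integral_ne_zero ?_)
    (.of_forall fun v ↦ by positivity)).symm
  rw [GaussianFourier.integral_rexp_neg_mul_sq_norm hb]
  positivity

theorem heatKernel_lconvolution {s t : ℝ} (hs : 0 < s) (ht : 0 < t) :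
    heatKernel (V := V) s ⋆ₗ heatKernel t = heatKernel (s + t) := by
  ext x
  have h_const : (4 * π * s) ^ (-(finrank ℝ V / 2 : ℝ)) * (4 * π * t) ^ (-(finrank ℝ V / 2 : ℝ)) *
      (π / ((s + t) / (4 * s * t))) ^ (finrank ℝ V / 2 : ℝ) =
        (4 * π * (s + t)) ^ (-(finrank ℝ V / 2 : ℝ)) := by
    rw [← inv_inv (π / _), inv_rpow (by positivity), ← rpow_neg (by positivity),
      ← mul_rpow (by positivity) (by positivity), ← mul_rpow (by positivity) (by positivity)]
    congr 1
    field_simp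
  simp_rw [lconvolution_def, heatKernel_mul_heatKernel hs ht]
  rw [lintegral_const_mul' _ _ ENNReal.ofReal_ne_top,
    lintegral_sub_right_eq_self fun y : V ↦
      ENNReal.ofReal (exp (-((s + t) / (4 * s * t)) * ‖y‖ ^ 2)),
    lintegral_exp_neg_mul_sq_norm (by positivity), ← ENNReal.ofReal_mul (by positivity),
    mul_right_comm, h_const, heatKernel]

end Gaussian

section RieszKernel

variable {V : Type*} [NormedAddCommGroup V] [InnerProductSpace ℝ V]

/-- The kernel `R_{γ,n} / |v|^{n-γ}` of the Riesz potential of order `γ` on an `n`-dimensional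
Euclidean space. For `γ < n` its value at `v = 0` is the junk value `0`. -/
noncomputable def rieszKernel (γ : ℝ) (v : V) : ℝ :=
  rieszConst (finrank ℝ V) γ / ‖v‖ ^ (finrank ℝ V - γ)

lemma rieszConst_pos {n : ℕ} {γ : ℝ} (hγ : 0 < γ) (hγn : γ < n) : 0 < rieszConst n γ :=
  div_pos (Gamma_pos_of_pos (half_pos (sub_pos.2 hγn))) (by positivity)

lemma rieszKernel_nonneg {γ : ℝ} (hγ : 0 < γ) (hγn : γ < finrank ℝ V) (v : V) :
    0 ≤ rieszKernel γ v :=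
  div_nonneg (rieszConst_pos hγ hγn).le (by positivity)

lemma rieszConst_div_rpow_eq (n : ℕ) (γ : ℝ) {r : ℝ} (hr : 0 < r) :
    rieszConst n γ / r ^ (n - γ) = (4 * π) ^ (-(n / 2 : ℝ)) / Gamma (γ / 2) *
      (Gamma ((n - γ) / 2) / (r ^ 2 / 4) ^ ((n - γ) / 2)) := by
  have h_sq : r ^ 2 / 4 = (r / 2) ^ (2 : ℝ) := by
    rw [rpow_two]
    ring
  have h_four : (4 : ℝ) = 2 ^ (2 : ℝ) := by norm_num
  rw [rieszConst, h_sq, ← rpow_mul (by positivity), mul_div_cancel₀ _ two_ne_zero,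
    div_rpow hr.le two_pos.le, rpow_sub two_pos, rpow_neg (by positivity),
    mul_rpow (by norm_num) pi_pos.le, h_four, ← rpow_mul two_pos.le,
    mul_div_cancel₀ _ two_ne_zero]
  field_simp

lemma riemannLiouvilleKernel_mul_heatKernel {a t : ℝ} (ha : 0 < a) (ht : 0 < t) (v : V) :
    riemannLiouvilleKernel a t * heatKernel t v =
      ENNReal.ofReal ((4 * π) ^ (-(finrank ℝ V / 2 : ℝ)) / Gamma a) *
        ENNReal.ofReal (t ^ (-(finrank ℝ V / 2 - a) - 1) * exp (-(‖v‖ ^ 2 / 4 / t))) := by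
  rw [riemannLiouvilleKernel_of_pos a ht, heatKernel, ← ENNReal.ofReal_mul (by positivity),
    ← ENNReal.ofReal_mul (by positivity), mul_rpow (by positivity) ht.le, div_div,
    show -(finrank ℝ V / 2 - a) - 1 = a - 1 + -(finrank ℝ V / 2 : ℝ) by ring, rpow_add ht]
  ring_nf

theorem subordinate_heatKernel {γ : ℝ} (hγ : 0 < γ) (hγn : γ < finrank ℝ V) {v : V} (hv : v ≠ 0) :
    subordinate volume heatKernel (riemannLiouvilleKernel (γ / 2)) v =
      ENNReal.ofReal (rieszKernel γ v) := by
  have hr : 0 < ‖v‖ := norm_pos_iff.2 hv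
  have h_support : (fun t ↦ riemannLiouvilleKernel (γ / 2) t * heatKernel t v).support ⊆
      Set.Ioi 0 := fun t ht ↦ pos_of_riemannLiouvilleKernel_ne_zero (left_ne_zero_of_mul ht)
  rw [subordinate, ← setLIntegral_eq_of_support_subset h_support,
    setLIntegral_congr_fun measurableSet_Ioi fun t ht ↦
      riemannLiouvilleKernel_mul_heatKernel (half_pos hγ) ht v,
    lintegral_const_mul' _ _ ENNReal.ofReal_ne_top, ← sub_div,
    lintegral_rpow_mul_exp_neg_div_Ioi (half_pos (sub_pos.2 hγn)) (by positivity),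
    ← ENNReal.ofReal_mul (by positivity), rieszKernel, rieszConst_div_rpow_eq _ _ hr]

variable [FiniteDimensional ℝ V] [MeasurableSpace V] [BorelSpace V]

theorem ofReal_rieszKernel_lconvolution {α₁ α₂ : ℝ} (h₁ : 0 < α₁) (h₂ : 0 < α₂)
    (hsum : α₁ + α₂ < finrank ℝ V) {v : V} (hv : v ≠ 0) :
    ((fun y ↦ ENNReal.ofReal (rieszKernel α₁ y)) ⋆ₗ
        fun y ↦ ENNReal.ofReal (rieszKernel α₂ y)) v =
      ENNReal.ofReal (rieszKernel (α₁ + α₂) v) := by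
  have : Nontrivial V := ⟨v, 0, hv⟩
  have h_ae : ∀ᵐ y : V, y ≠ 0 ∧ y ≠ v := (Measure.ae_ne _ _).and (Measure.ae_ne _ _)
  calc _ = (subordinate volume heatKernel (riemannLiouvilleKernel (α₁ / 2)) ⋆ₗ
        subordinate volume heatKernel (riemannLiouvilleKernel (α₂ / 2))) v := by
        refine lintegral_congr_ae (h_ae.mono fun y ⟨hy, hyv⟩ ↦ ?_)
        have hyv' : -y + v ≠ 0 := by rwa [neg_add_eq_sub, sub_ne_zero, ne_comm]
        simp only [subordinate_heatKernel h₁ (by linarith) hy,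
          subordinate_heatKernel h₂ (by linarith) hyv']
    _ = subordinate volume heatKernel
          (riemannLiouvilleKernel (α₁ / 2) ⋆ₗ riemannLiouvilleKernel (α₂ / 2)) v := by
        rw [subordinate_lconvolution measurable_uncurry_heatKernel
          (measurable_riemannLiouvilleKernel _) (measurable_riemannLiouvilleKernel _)]
        exact fun s t hs ht ↦ heatKernel_lconvolution (pos_of_riemannLiouvilleKernel_ne_zero hs)
          (pos_of_riemannLiouvilleKernel_ne_zero ht)
    _ = ENNReal.ofReal (rieszKernel (α₁ + α₂) v) := by
        rw [riemannLiouvilleKernel_lconvolution (half_pos h₁) (half_pos h₂), ← add_div,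
          subordinate_heatKernel (add_pos h₁ h₂) hsum hv]

end RieszKernel

theorem stmt_7_general {V : Type*} [NormedAddCommGroup V] [InnerProductSpace ℝ V]
    [FiniteDimensional ℝ V] [MeasurableSpace V] [BorelSpace V] {α₁ α₂ : ℝ} (h₁ : 0 < α₁)
    (h₂ : 0 < α₂) (hsum : α₁ + α₂ < finrank ℝ V) {x z : V} (hxz : x ≠ z) :
    ∫ y, rieszKernel α₁ (x - y) * rieszKernel α₂ (y - z) = rieszKernel (α₁ + α₂) (x - z) := by
  have h_nonneg₁ := rieszKernel_nonneg (V := V) h₁ (by linarith)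
  have h_nonneg₂ := rieszKernel_nonneg (V := V) h₂ (by linarith)
  have h_nonneg := rieszKernel_nonneg (V := V) (add_pos h₁ h₂) hsum
  have h_meas (γ : ℝ) : Measurable (rieszKernel (V := V) γ) := by
    unfold rieszKernel
    fun_prop
  rw [integral_eq_lintegral_of_nonneg_ae
      (.of_forall fun y ↦ mul_nonneg (h_nonneg₁ _) (h_nonneg₂ _))
      (((h_meas α₁).comp (by fun_prop)).mul
        ((h_meas α₂).comp (by fun_prop))).aestronglyMeasurable,
    ← ENNReal.toReal_ofReal (h_nonneg (x - z)),
    ← ofReal_rieszKernel_lconvolution h₁ h₂ hsum (sub_ne_zero.2 hxz), lconvolution_def,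
    ← lintegral_sub_left_eq_self _ x]
  simp only [ENNReal.ofReal_mul (h_nonneg₁ _), sub_sub_cancel, sub_sub, neg_add_eq_sub,
    add_comm z]

/-- Riesz potential composition (semigroup) formula:
`∫ (R_{α₁,n}/|x-y|^{n-α₁}) (R_{α₂,n}/|y-z|^{n-α₂}) dy = R_{α₁+α₂,n}/|x-z|^{n-α₁-α₂}`
for `α₁, α₂ > 0` with `α₁ + α₂ < n`, and `x ≠ z`. -/
theorem stmt_7 (n : ℕ) (hn : 1 ≤ n) (α₁ α₂ : ℝ) (h₁ : 0 < α₁) (h₂ : 0 < α₂)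
    (hsum : α₁ + α₂ < n) (x z : EuclideanSpace ℝ (Fin n)) (hxz : x ≠ z) :
    ∫ y : EuclideanSpace ℝ (Fin n),
        (rieszConst n α₁ / ‖x - y‖ ^ ((n : ℝ) - α₁)) *
        (rieszConst n α₂ / ‖y - z‖ ^ ((n : ℝ) - α₂)) =
      rieszConst n (α₁ + α₂) / ‖x - z‖ ^ ((n : ℝ) - (α₁ + α₂)) := by
  simpa only [rieszKernel, finrank_euclideanSpace_fin] using
    stmt_7_general h₁ h₂ (by rwa [finrank_euclideanSpace_fin]) hxz
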